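/- arXiv:1406.6429 — 3 statements merged into one kernel-verified Lean document; each statement's English description precedes it below -/
import Mathlib

section
/- Let m ≥ 1, n ≥ 2, and for 1 ≤ i ≤ m let f_i(x) = xᵀA_i x + c_iᵀx + d_i be quadratic functions on ℝⁿ with f₁(x) = ‖x‖² − 1 (A₁ = I, c₁ = 0, d₁ = −1), and let U_i > 0 be reals for 2 ≤ i ≤ m. Let 0 ≤ δ < 1 and suppose ẑ = (v̂₀, x̂, ŝ₁, …, ŝ_m, ŵ₂, …, ŵ_m) satisfies |x̂ᵀA_i x̂ + v̂₀ c_iᵀx̂ + d_i v̂₀² + ŝ_i²| ≤ δ for all 1 ≤ i ≤ m, |(ŝ_i² + ŵ_i²)/U_i − v̂₀²| ≤ δ for all 2 ≤ i ≤ m, and additionally |‖x̂‖² + ŝ₁² + Σ_{i=2}^m (ŝ_i² + ŵ_i²)/U_i + v̂₀² − (m+1)| ≤ δ. Then 1 − δ ≤ v̂₀² ≤ 1 + δ. -/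
open Matrix Finset

/-!
Every term of the last equation of (sys2), apart from `v₀²` itself, is within `δ` of `v₀²`: the term
`‖x‖² + s₁²` by the homogenised sphere equation and each `(sᵢ² + wᵢ²) / Uᵢ` by its own equation.
There are `m` such terms, so the left-hand side differs from `(m + 1) v₀²` by at most `m δ`. It also
differs from `m + 1` by at most `δ`, and dividing by `m + 1` gives `|v₀² - 1| ≤ δ`.
-/

section

variable {R ι : Type*} [CommRing R] [LinearOrder R] [IsStrictOrderedRing R]

lemma abs_sum_sub_card_mul_le {I : Finset ι} {t : ι → R} {a δ : R}
    (ht : ∀ i ∈ I, |t i - a| ≤ δ) : |∑ i ∈ I, t i - #I * a| ≤ #I * δ := by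
  calc |∑ i ∈ I, t i - #I * a| = |∑ i ∈ I, (t i - a)| := by
        rw [sum_sub_distrib, sum_const, nsmul_eq_mul]
    _ ≤ ∑ i ∈ I, |t i - a| := abs_sum_le_sum_abs _ _
    _ ≤ #I * δ := by simpa only [nsmul_eq_mul] using sum_le_card_nsmul I _ δ ht

lemma abs_sub_le_of_abs_sum_add_sub_le {I : Finset ι} {t : ι → R} {a b δ : R}
    (ht : ∀ i ∈ I, |t i - a| ≤ δ) (hsum : |∑ i ∈ I, t i + a - (#I + 1) * b| ≤ δ) :
    |a - b| ≤ δ := by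
  have hpos : (0 : R) < #I + 1 := by positivity
  refine le_of_mul_le_mul_left ?_ hpos
  calc (#I + 1) * |a - b| = |(#I + 1) * (a - b)| := by rw [abs_mul, abs_of_pos hpos]
    _ = |(∑ i ∈ I, t i + a - (#I + 1) * b) - (∑ i ∈ I, t i - #I * a)| := by ring_nf
    _ ≤ |∑ i ∈ I, t i + a - (#I + 1) * b| + |∑ i ∈ I, t i - #I * a| := abs_sub _ _
    _ ≤ δ + #I * δ := add_le_add hsum (abs_sum_sub_card_mul_le ht)
    _ = (#I + 1) * δ := by ring

lemma abs_sub_le_of_abs_add_sum_erase_add_sub_le [Fintype ι] [DecidableEq ι] {o : ι} {t : ι → R}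
    {r a b δ : R} (hr : |r - a| ≤ δ) (ht : ∀ i, i ≠ o → |t i - a| ≤ δ)
    (hsum : |r + ∑ i ∈ univ.erase o, t i + a - (Fintype.card ι + 1) * b| ≤ δ) :
    |a - b| ≤ δ := by
  refine abs_sub_le_of_abs_sum_add_sub_le (I := univ) (t := Function.update t o r)
    (fun i _ ↦ ?_) ?_
  · obtain rfl | hi := eq_or_ne i o
    · rwa [Function.update_self]
    · rw [Function.update_of_ne hi]
      exact ht i hi
  · rwa [sum_update_of_mem (mem_univ o), sdiff_singleton_eq_erase, card_univ]

end

lemma homogenized_sphere_add_sq {R κ : Type*} [CommRing R] [Fintype κ] [DecidableEq κ]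
    (x : κ → R) (v s : R) :
    x ⬝ᵥ (1 : Matrix κ κ R).mulVec x + v * (0 ⬝ᵥ x) + -1 * v ^ 2 + s ^ 2
      = ∑ j, x j ^ 2 + s ^ 2 - v ^ 2 := by
  rw [one_mulVec, zero_dotProduct]
  simp only [dotProduct, ← sq]
  ring

theorem stmt_1_general {K ι κ : Type*} [Field K] [LinearOrder K] [IsStrictOrderedRing K]
    [Fintype ι] [DecidableEq ι] [Fintype κ] {o : ι} {U : ι → K} (_hU : ∀ i, i ≠ o → U i ≠ 0)
    {δ v0 : K} {x : κ → K} {s w : ι → K}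
    (hsphere : |∑ j, x j ^ 2 + s o ^ 2 - v0 ^ 2| ≤ δ)
    (hslack : ∀ i, i ≠ o → |(s i ^ 2 + w i ^ 2) / U i - v0 ^ 2| ≤ δ)
    (hsum : |∑ j, x j ^ 2 + s o ^ 2 + ∑ i ∈ univ.erase o, (s i ^ 2 + w i ^ 2) / U i
            + v0 ^ 2 - (Fintype.card ι + 1)| ≤ δ) :
    1 - δ ≤ v0 ^ 2 ∧ v0 ^ 2 ≤ 1 + δ := by
  have hv : |v0 ^ 2 - 1| ≤ δ :=
    abs_sub_le_of_abs_add_sum_erase_add_sub_le hsphere hslack (by rwa [mul_one])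
  rwa [abs_sub_le_iff, sub_le_iff_le_add', sub_le_comm, and_comm] at hv

/-- Lemma `equiv0`(ii) of the paper: a `δ`-feasible point for the whole system (sys2)
satisfies `1 - δ ≤ v₀² ≤ 1 + δ`. -/
theorem stmt_1 (n m : ℕ) [NeZero m] (hn : 2 ≤ n)
    (A : Fin m → Matrix (Fin n) (Fin n) ℝ)
    (c : Fin m → (Fin n → ℝ)) (d : Fin m → ℝ)
    (hAsym : ∀ i, (A i).IsSymm)
    (hA1 : A 0 = 1) (hc1 : c 0 = 0) (hd1 : d 0 = -1)
    (U : Fin m → ℝ) (hU : ∀ i, i ≠ 0 → 0 < U i)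
    (δ : ℝ) (hδ0 : 0 ≤ δ) (hδ1 : δ < 1)
    (v0 : ℝ) (x : Fin n → ℝ) (s : Fin m → ℝ) (w : Fin m → ℝ)
    (h1 : ∀ i, |x ⬝ᵥ (A i).mulVec x + v0 * (c i ⬝ᵥ x) + d i * v0 ^ 2 + s i ^ 2| ≤ δ)
    (h2 : ∀ i, i ≠ 0 → |(s i ^ 2 + w i ^ 2) / U i - v0 ^ 2| ≤ δ)
    (h3 : |(∑ j, x j ^ 2) + s 0 ^ 2 + (∑ i ∈ univ.erase 0, (s i ^ 2 + w i ^ 2) / U i)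
            + v0 ^ 2 - (m + 1)| ≤ δ) :
    1 - δ ≤ v0 ^ 2 ∧ v0 ^ 2 ≤ 1 + δ := by
  have hsphere := h1 0
  rw [hA1, hc1, hd1, homogenized_sphere_add_sq] at hsphere
  exact stmt_1_general (fun i hi ↦ (hU i hi).ne') hsphere h2 (by rwa [Fintype.card_fin])
end

section
/- Let m ≥ 1, n ≥ 2, and for 1 ≤ i ≤ m let f_i(x) = xᵀA_i x + c_iᵀx + d_i be quadratic functions on ℝⁿ with f₁(x) = ‖x‖² − 1 (A₁ = I, c₁ = 0, d₁ = −1). For 2 ≤ i ≤ m let U_i > 0 satisfy |f_i(x)| ≤ U_i for every x ∈ ℝⁿ with ‖x‖² ≤ 2. Let 0 ≤ ε < 1/2 and suppose x̃ ∈ ℝⁿ satisfies f_i(x̃) ≤ ε for all 1 ≤ i ≤ m. Define ṽ₀ = 1, s̃_i = √(max{0, −f_i(x̃)}) for 1 ≤ i ≤ m, and w̃_i = √(U_i − s̃_i²) for 2 ≤ i ≤ m (the value under the radical being nonnegative). Then the point (ṽ₀, x̃, s̃₁, …, s̃_m, w̃₂, …, w̃_m) is mε-feasible for system (sys2), i.e.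 |x̃ᵀA_i x̃ + ṽ₀ c_iᵀx̃ + d_i ṽ₀² + s̃_i²| ≤ mε for 1 ≤ i ≤ m, |(s̃_i² + w̃_i²)/U_i − ṽ₀²| ≤ mε for 2 ≤ i ≤ m, and |‖x̃‖² + s̃₁² + Σ_{i=2}^m (s̃_i² + w̃_i²)/U_i + ṽ₀² − (m+1)| ≤ mε. -/
open Matrix Finset

/-! At `v₀ = 1` adding the slack `sᵢ²` to `fᵢ(x)` leaves its positive part, which lies in `[0, ε]`.
The variables `wᵢ` are chosen so that the equations `(sᵢ² + wᵢ²) / Uᵢ = v₀²` hold exactly; this is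
possible because `f₁(x) ≤ ε` puts `x` in the ball on which `Uᵢ` bounds `fᵢ`. Each of them
contributes exactly `1` to the normalization equation, whose residual is therefore the residual
`f₁(x) + s₁²` of the first equation. Hence the error is `ε`, with no factor `m`. -/

lemma add_sq_sqrt_max_zero_neg (a : ℝ) : a + √(max 0 (-a)) ^ 2 = max a 0 := by
  rw [Real.sq_sqrt (le_max_left _ _), ← max_add_add_left, add_zero, add_neg_cancel]

lemma abs_add_sq_sqrt_max_zero_neg_le {a ε : ℝ} (hε : 0 ≤ ε) (ha : a ≤ ε) :
    |a + √(max 0 (-a)) ^ 2| ≤ ε := by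
  rw [add_sq_sqrt_max_zero_neg, abs_of_nonneg (le_max_right _ _)]
  exact max_le ha hε

lemma sq_sqrt_max_zero_neg_le {a b : ℝ} (hb : 0 ≤ b) (hab : -b ≤ a) :
    √(max 0 (-a)) ^ 2 ≤ b := by
  rw [Real.sq_sqrt (le_max_left _ _)]
  exact max_le hb (neg_le.mp hab)

lemma sq_add_sq_sqrt_sub_sq {a b : ℝ} (h : a ^ 2 ≤ b) : a ^ 2 + √(b - a ^ 2) ^ 2 = b := by
  rw [Real.sq_sqrt (sub_nonneg.mpr h), add_sub_cancel]

lemma dotProduct_one_mulVec_self {κ R : Type*} [Fintype κ] [DecidableEq κ] [Semiring R]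
    (x : κ → R) : x ⬝ᵥ (1 : Matrix κ κ R) *ᵥ x = ∑ j, x j ^ 2 := by
  simp only [one_mulVec, dotProduct, sq]

lemma sum_erase_eq_card_sub_one {ι R : Type*} [Fintype ι] [DecidableEq ι] [Ring R]
    {g : ι → R} {i₀ : ι} (hg : ∀ i, i ≠ i₀ → g i = 1) :
    ∑ i ∈ univ.erase i₀, g i = Fintype.card ι - 1 := by
  rw [sum_congr rfl fun i hi => hg i (ne_of_mem_erase hi),
    sum_erase_eq_sub (f := fun _ => (1 : R)) (mem_univ i₀), sum_const, card_univ,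
    nsmul_one]

theorem stmt_2_general {ι κ : Type*} [Fintype ι] [DecidableEq ι] [Fintype κ] [DecidableEq κ]
    (i₀ : ι) (A : ι → Matrix κ κ ℝ) (c : ι → κ → ℝ) (d : ι → ℝ) (f : ι → (κ → ℝ) → ℝ)
    (hf : ∀ i x, f i x = x ⬝ᵥ A i *ᵥ x + c i ⬝ᵥ x + d i)
    (hA : A i₀ = 1) (hc : c i₀ = 0) (hd : d i₀ = -1)
    (ε : ℝ) (hε : 0 ≤ ε) (U : ι → ℝ) (hU : ∀ i, i ≠ i₀ → 0 < U i)
    (hUf : ∀ i, i ≠ i₀ → ∀ x : κ → ℝ, ∑ j, x j ^ 2 ≤ 1 + ε → -U i ≤ f i x)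
    (x : κ → ℝ) (hx : ∀ i, f i x ≤ ε) (v₀ : ℝ) (hv₀ : v₀ = 1)
    (s : ι → ℝ) (hs : ∀ i, s i = √(max 0 (-f i x)))
    (w : ι → ℝ) (hw : ∀ i, i ≠ i₀ → w i = √(U i - s i ^ 2)) :
    (∀ i, |x ⬝ᵥ A i *ᵥ x + v₀ * (c i ⬝ᵥ x) + d i * v₀ ^ 2 + s i ^ 2| ≤ ε) ∧
    (∀ i, i ≠ i₀ → (s i ^ 2 + w i ^ 2) / U i = v₀ ^ 2) ∧
    |∑ j, x j ^ 2 + s i₀ ^ 2 + ∑ i ∈ univ.erase i₀, (s i ^ 2 + w i ^ 2) / U i + v₀ ^ 2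
        - (Fintype.card ι + 1)| ≤ ε := by
  subst hv₀
  have residual_le (i : ι) : |f i x + s i ^ 2| ≤ ε := by
    rw [hs]
    exact abs_add_sq_sqrt_max_zero_neg_le hε (hx i)
  have norm_constraint : f i₀ x = ∑ j, x j ^ 2 - 1 := by
    rw [hf, hA, hc, hd, dotProduct_one_mulVec_self, zero_dotProduct, add_zero, sub_eq_add_neg]
  have mem_ball : ∑ j, x j ^ 2 ≤ 1 + ε := by linarith [hx i₀]
  have ratio_eq_one (i : ι) (hi : i ≠ i₀) : (s i ^ 2 + w i ^ 2) / U i = 1 := by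
    have slack_le : s i ^ 2 ≤ U i := by
      rw [hs]
      exact sq_sqrt_max_zero_neg_le (hU i hi).le (hUf i hi x mem_ball)
    rw [hw i hi, sq_add_sq_sqrt_sub_sq slack_le, div_self (hU i hi).ne']
  refine ⟨fun i => ?_, fun i hi => by rw [ratio_eq_one i hi, one_pow], ?_⟩
  · simpa only [hf, one_mul, one_pow, mul_one] using residual_le i
  · rw [sum_erase_eq_card_sub_one ratio_eq_one]
    convert residual_le i₀ using 2
    rw [norm_constraint]
    ring

/-- Lemma `equiv`(a) of the paper: from an `ε`-feasible point `x̃` of the system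
`fᵢ(x) ≤ 0` one constructs an `mε`-feasible point of the system (sys2), with
`ṽ₀ = 1`, `s̃ᵢ = √(max 0 (-fᵢ(x̃)))` and `w̃ᵢ = √(Uᵢ - s̃ᵢ²)`. -/
theorem stmt_2 (n m : ℕ) [NeZero m] (hn : 2 ≤ n)
    (A : Fin m → Matrix (Fin n) (Fin n) ℝ)
    (c : Fin m → (Fin n → ℝ)) (d : Fin m → ℝ)
    (hAsym : ∀ i, (A i).IsSymm)
    (f : Fin m → (Fin n → ℝ) → ℝ)
    (hf : ∀ i x, f i x = x ⬝ᵥ (A i).mulVec x + c i ⬝ᵥ x + d i)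
    (hA1 : A 0 = 1) (hc1 : c 0 = 0) (hd1 : d 0 = -1)
    (U : Fin m → ℝ) (hU : ∀ i, i ≠ 0 → 0 < U i)
    (hUbd : ∀ i, i ≠ 0 → ∀ x : Fin n → ℝ, (∑ j, x j ^ 2) ≤ 2 → |f i x| ≤ U i)
    (ε : ℝ) (hε0 : 0 ≤ ε) (hε1 : ε < 1 / 2)
    (x : Fin n → ℝ) (hx : ∀ i, f i x ≤ ε)
    (v0 : ℝ) (hv0 : v0 = 1)
    (s : Fin m → ℝ) (hs : ∀ i, s i = Real.sqrt (max 0 (-(f i x))))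
    (w : Fin m → ℝ) (hw : ∀ i, i ≠ 0 → w i = Real.sqrt (U i - s i ^ 2)) :
    (∀ i, |x ⬝ᵥ (A i).mulVec x + v0 * (c i ⬝ᵥ x) + d i * v0 ^ 2 + s i ^ 2| ≤ m * ε) ∧
    (∀ i, i ≠ 0 → |(s i ^ 2 + w i ^ 2) / U i - v0 ^ 2| ≤ m * ε) ∧
    |(∑ j, x j ^ 2) + s 0 ^ 2 + (∑ i ∈ univ.erase 0, (s i ^ 2 + w i ^ 2) / U i)
        + v0 ^ 2 - (m + 1)| ≤ m * ε := by
  have le_mul : ε ≤ m * ε :=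
    le_mul_of_one_le_left hε0 (Nat.one_le_cast.mpr (NeZero.one_le (n := m)))
  obtain ⟨quadratic, ratio, normalization⟩ := stmt_2_general 0 A c d f hf hA1 hc1 hd1 ε hε0 U hU
    (fun i hi y hy => neg_le_of_abs_le (hUbd i hi y (by linarith))) x hx v0 hv0 s hs w hw
  exact ⟨fun i => (quadratic i).trans le_mul,
    fun i hi => by simpa [ratio i hi] using hε0.trans le_mul,
    by simpa using normalization.trans le_mul⟩
end

section
/- Let m ≥ 1, n ≥ 2, and for 1 ≤ i ≤ m let f_i(x) = xᵀA_i x + c_iᵀx + d_i be quadratic functions on ℝⁿ with f₁(x) = ‖x‖² − 1 (A₁ = I, c₁ = 0, d₁ = −1). For 2 ≤ i ≤ m let U_i > 0 satisfy |f_i(x)| ≤ U_i for every x ∈ ℝⁿ with ‖x‖² ≤ 2. Then the system f_i(x) ≤ 0 (1 ≤ i ≤ m) has a solution x ∈ ℝⁿ if and only if system (sys2) has an exact solution, i.e. there exist v₀ ∈ ℝ, x ∈ ℝⁿ, s₁, …, s_m ∈ ℝ, w₂, …, w_m ∈ ℝ satisfying xᵀA_i x + v₀ c_iᵀx + d_i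 v₀² + s_i² = 0 for 1 ≤ i ≤ m, (s_i² + w_i²)/U_i − v₀² = 0 for 2 ≤ i ≤ m, and ‖x‖² + s₁² + Σ_{i=2}^m (s_i² + w_i²)/U_i + v₀² = m + 1. -/
open Matrix Finset

/-!
Squared slack variables turn the inequalities into equations, and the homogenizing variable `v₀`
turns these into homogeneous ones. The first two groups of equations of (sys2) force the left-hand
side of the last one to be `(m + 1) v₀²`: the equation of `f₁ = ‖x‖² - 1` says `‖x‖² + s₁² = v₀²`,
and each of the `m - 1` terms of the sum is `v₀²`. Hence the last equation just says `v₀² = 1`, and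
dehomogenizing at `v₀ = ±1` amounts to replacing `x` by `v₀ x`.
-/

section QuadraticFun

variable {R κ : Type*} [CommRing R] [Fintype κ]

/-- The quadratic function `x ↦ xᵀ A x + cᵀ x + d`, with `A` an arbitrary square matrix. -/
def quadraticFun (A : Matrix κ κ R) (c : κ → R) (d : R) (x : κ → R) : R :=
  x ⬝ᵥ A *ᵥ x + c ⬝ᵥ x + d

/-- The quadratic form `(v, x) ↦ xᵀ A x + v cᵀ x + d v²` that homogenizes `quadraticFun A c d`. -/
def quadraticHomogenization (A : Matrix κ κ R) (c : κ → R) (d v : R) (x : κ → R) : R :=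
  x ⬝ᵥ A *ᵥ x + v * (c ⬝ᵥ x) + d * v ^ 2

variable (A : Matrix κ κ R) (c : κ → R) (d v : R) (x : κ → R)

theorem quadraticHomogenization_one :
    quadraticHomogenization A c d 1 x = quadraticFun A c d x := by
  simp only [quadraticHomogenization, quadraticFun, one_mul, one_pow, mul_one]

theorem quadraticHomogenization_smul (t : R) :
    quadraticHomogenization A c d (t * v) (t • x) = t ^ 2 * quadraticHomogenization A c d v x := by
  simp only [quadraticHomogenization, mulVec_smul, dotProduct_smul, smul_dotProduct, smul_eq_mul]
  ring

variable {v} in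
theorem quadraticFun_smul_of_sq_eq_one (hv : v ^ 2 = 1) :
    quadraticFun A c d (v • x) = quadraticHomogenization A c d v x := by
  calc quadraticFun A c d (v • x)
      = quadraticHomogenization A c d (v * v) (v • x) := by
        rw [← sq, hv, quadraticHomogenization_one]
    _ = quadraticHomogenization A c d v x := by
        rw [quadraticHomogenization_smul, hv, one_mul]

theorem quadraticHomogenization_sphere [DecidableEq κ] :
    quadraticHomogenization (1 : Matrix κ κ R) 0 (-1) v x = ∑ j, x j ^ 2 - v ^ 2 := by
  rw [quadraticHomogenization, one_mulVec, zero_dotProduct]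
  simp only [dotProduct, sq]
  ring

theorem quadraticFun_sphere [DecidableEq κ] :
    quadraticFun (1 : Matrix κ κ R) 0 (-1) x = ∑ j, x j ^ 2 - 1 := by
  rw [← quadraticHomogenization_one, quadraticHomogenization_sphere, one_pow]

end QuadraticFun

theorem exists_add_sq_eq_zero_iff {y : ℝ} : (∃ s : ℝ, y + s ^ 2 = 0) ↔ y ≤ 0 := by
  constructor
  · rintro ⟨s, hs⟩
    linarith [sq_nonneg s]
  · intro hy
    exact ⟨√(-y), by rw [Real.sq_sqrt (neg_nonneg.mpr hy), add_neg_cancel]⟩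

theorem quadraticFun_smul_nonpos_of_add_sq_eq_zero {κ : Type*} [Fintype κ]
    {A : Matrix κ κ ℝ} {c : κ → ℝ} {d v s : ℝ} {x : κ → ℝ} (hv : v ^ 2 = 1)
    (hs : quadraticHomogenization A c d v x + s ^ 2 = 0) : quadraticFun A c d (v • x) ≤ 0 := by
  rw [quadraticFun_smul_of_sq_eq_one A c d x hv]
  exact exists_add_sq_eq_zero_iff.mp ⟨s, hs⟩

theorem sum_erase_add_of_forall_ne_eq {ι R : Type*} [Fintype ι] [DecidableEq ι]
    [NonAssocSemiring R] {i₀ : ι} {g : ι → R} {t : R} (hg : ∀ i ≠ i₀, g i = t) :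
    ∑ i ∈ univ.erase i₀, g i + t = Fintype.card ι * t := by
  rw [sum_congr rfl fun i hi => hg i (ne_of_mem_erase hi),
    sum_erase_add univ (fun _ => t) (mem_univ i₀), sum_const, card_univ, nsmul_eq_mul]

section Sys2

variable {ι κ : Type*} [Fintype ι] [DecidableEq ι] [Fintype κ]

/-- `(v, x, s, w)` solves the system (sys2) attached to the quadratic functions
`quadraticFun (A i) (c i) (d i)` and the bounds `U i`. The index `i₀` plays the role of `1` in the
paper, so `U i₀` and `w i₀` do not occur. -/
def IsSys2Solution (A : ι → Matrix κ κ ℝ) (c : ι → κ → ℝ) (d U : ι → ℝ) (i₀ : ι)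
    (v : ℝ) (x : κ → ℝ) (s w : ι → ℝ) : Prop :=
  (∀ i, quadraticHomogenization (A i) (c i) (d i) v x + s i ^ 2 = 0) ∧
  (∀ i, i ≠ i₀ → (s i ^ 2 + w i ^ 2) / U i - v ^ 2 = 0) ∧
  ∑ j, x j ^ 2 + s i₀ ^ 2 + ∑ i ∈ univ.erase i₀, (s i ^ 2 + w i ^ 2) / U i + v ^ 2 =
    Fintype.card ι + 1

variable {A : ι → Matrix κ κ ℝ} {c : ι → κ → ℝ} {d U : ι → ℝ} {i₀ : ι}
  {v : ℝ} {x : κ → ℝ} {s w : ι → ℝ}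

theorem isSys2Solution_iff_sq_eq_one [DecidableEq κ]
    (hA : A i₀ = 1) (hc : c i₀ = 0) (hd : d i₀ = -1) :
    IsSys2Solution A c d U i₀ v x s w ↔
      (∀ i, quadraticHomogenization (A i) (c i) (d i) v x + s i ^ 2 = 0) ∧
      (∀ i, i ≠ i₀ → (s i ^ 2 + w i ^ 2) / U i = v ^ 2) ∧ v ^ 2 = 1 := by
  simp only [IsSys2Solution, sub_eq_zero]
  refine and_congr_right fun hslack => and_congr_right fun hbound => ?_
  have hsphere : ∑ j, x j ^ 2 - v ^ 2 + s i₀ ^ 2 = 0 := by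
    simpa only [hA, hc, hd, quadraticHomogenization_sphere] using hslack i₀
  have hsum := sum_erase_add_of_forall_ne_eq hbound
  have hlhs : ∑ j, x j ^ 2 + s i₀ ^ 2 + ∑ i ∈ univ.erase i₀, (s i ^ 2 + w i ^ 2) / U i + v ^ 2 =
      (Fintype.card ι + 1) * v ^ 2 := by
    linarith
  have hcard : (Fintype.card ι + 1 : ℝ) ≠ 0 := by positivity
  rw [hlhs, mul_eq_left₀ hcard]

theorem exists_isSys2Solution_one [DecidableEq κ]
    (hA : A i₀ = 1) (hc : c i₀ = 0) (hd : d i₀ = -1) (hU : ∀ i, i ≠ i₀ → 0 < U i)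
    (hx : ∀ i, quadraticFun (A i) (c i) (d i) x ≤ 0)
    (hUx : ∀ i, i ≠ i₀ → -U i ≤ quadraticFun (A i) (c i) (d i) x) :
    ∃ s w, IsSys2Solution A c d U i₀ 1 x s w := by
  choose s hs using fun i => exists_add_sq_eq_zero_iff.mpr (hx i)
  have hw : ∀ i, i ≠ i₀ → √(U i - s i ^ 2) ^ 2 = U i - s i ^ 2 := fun i hi =>
    Real.sq_sqrt (by linarith [hs i, hUx i hi])
  refine ⟨s, fun i => √(U i - s i ^ 2), (isSys2Solution_iff_sq_eq_one hA hc hd).mpr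
    ⟨fun i => ?_, fun i hi => ?_, one_pow 2⟩⟩
  · rw [quadraticHomogenization_one, hs i]
  · rw [hw i hi, add_sub_cancel, div_self (hU i hi).ne', one_pow]

theorem stmt_4_general [DecidableEq κ]
    (hA : A i₀ = 1) (hc : c i₀ = 0) (hd : d i₀ = -1) (hU : ∀ i, i ≠ i₀ → 0 < U i)
    (hUbd : ∀ i, i ≠ i₀ → ∀ x : κ → ℝ, ∑ j, x j ^ 2 ≤ 1 →
      -U i ≤ quadraticFun (A i) (c i) (d i) x) :
    (∃ x, ∀ i, quadraticFun (A i) (c i) (d i) x ≤ 0) ↔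
      ∃ v x s w, IsSys2Solution A c d U i₀ v x s w := by
  constructor
  · rintro ⟨x, hx⟩
    have hball : ∑ j, x j ^ 2 ≤ 1 := by
      simpa only [hA, hc, hd, quadraticFun_sphere, sub_nonpos] using hx i₀
    exact ⟨1, x, exists_isSys2Solution_one hA hc hd hU hx fun i hi => hUbd i hi x hball⟩
  · rintro ⟨v, x, s, w, h⟩
    have hv : v ^ 2 = 1 := ((isSys2Solution_iff_sq_eq_one hA hc hd).mp h).2.2
    exact ⟨v • x, fun i => quadraticFun_smul_nonpos_of_add_sq_eq_zero hv (h.1 i)⟩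

end Sys2

/-- Corollary `approx` of the paper: the system `fᵢ(x) ≤ 0`, `1 ≤ i ≤ m`, is feasible
if and only if the corresponding system (sys2) of quadratic equations is feasible. -/
theorem stmt_4 (n m : ℕ) [NeZero m] (hn : 2 ≤ n)
    (A : Fin m → Matrix (Fin n) (Fin n) ℝ)
    (c : Fin m → (Fin n → ℝ)) (d : Fin m → ℝ)
    (hAsym : ∀ i, (A i).IsSymm)
    (f : Fin m → (Fin n → ℝ) → ℝ)
    (hf : ∀ i x, f i x = x ⬝ᵥ (A i).mulVec x + c i ⬝ᵥ x + d i)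
    (hA1 : A 0 = 1) (hc1 : c 0 = 0) (hd1 : d 0 = -1)
    (U : Fin m → ℝ) (hU : ∀ i, i ≠ 0 → 0 < U i)
    (hUbd : ∀ i, i ≠ 0 → ∀ x : Fin n → ℝ, (∑ j, x j ^ 2) ≤ 2 → |f i x| ≤ U i) :
    (∃ x : Fin n → ℝ, ∀ i, f i x ≤ 0) ↔
    (∃ (v0 : ℝ) (x : Fin n → ℝ) (s : Fin m → ℝ) (w : Fin m → ℝ),
      (∀ i, x ⬝ᵥ (A i).mulVec x + v0 * (c i ⬝ᵥ x) + d i * v0 ^ 2 + s i ^ 2 = 0) ∧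
      (∀ i, i ≠ 0 → (s i ^ 2 + w i ^ 2) / U i - v0 ^ 2 = 0) ∧
      (∑ j, x j ^ 2) + s 0 ^ 2 + (∑ i ∈ univ.erase 0, (s i ^ 2 + w i ^ 2) / U i)
        + v0 ^ 2 = m + 1) := by
  obtain rfl : f = fun i => quadraticFun (A i) (c i) (d i) := funext₂ hf
  simpa only [IsSys2Solution, quadraticHomogenization, Fintype.card_fin] using
    stmt_4_general hA1 hc1 hd1 hU
      fun i hi x hx => (abs_le.mp (hUbd i hi x (hx.trans one_le_two))).1
end
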